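/- Let Y and Z be independent squared Bessel processes of dimension 2 beginning at space-time points (y₀,t₀) ∈ [0,1]² and (z₀,s₀) ∈ [0,1]² respectively, and let σ = inf{s > s₀ ∨ t₀ : Z(s) = Y(s) or Z(s) ∨ Y(s) = 2} ∧ 2. Then inf over all (y₀,t₀,z₀,s₀) ∈ [0,1]⁴ of P(σ = inf{s > s₀ ∨ t₀ : Z(s) = Y(s)}) is strictly positive, i.e. with probability bounded below uniformly in the starting data, the processes meet before either exceeds level 2 and before time 2. -/

import Mathlib

open MeasureTheory ProbabilityTheory Filter
open scoped ENNReal NNReal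

noncomputable section

namespace Paper

/-- A real-valued process indexed by `t ∈ [t0, ∞)` is a martingale w.r.t. the filtration `F`. -/
def MartingaleFrom {Ω : Type*} [MeasureSpace Ω] (t0 : ℝ) (F : ℝ → MeasurableSpace Ω)
    (X : ℝ → Ω → ℝ) : Prop :=
  (∀ t : ℝ, t0 ≤ t → Integrable (X t) (volume : Measure Ω)) ∧
  ∀ s t : ℝ, t0 ≤ s → s ≤ t →
    (volume : Measure Ω)[X t | F s] =ᵐ[(volume : Measure Ω)] X s

/-- `Y` is a solution, started at time `t0` from value `y0`, of the SDE
`dY = b(t, Y) dt + √(a(t, Y)) dB`, formulated via the martingale problem: for every `C²`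
compactly supported `f`, `f(Y_t) − ∫_{t0}^t (b f' + (a/2) f'')(s, Y_s) ds` is a martingale
in some filtration to which `Y` is adapted. -/
def IsDiffusionFrom {Ω : Type*} [MeasureSpace Ω] (t0 : ℝ) (b a : ℝ → ℝ → ℝ) (y0 : ℝ)
    (Y : Ω → ℝ → ℝ) : Prop :=
  (∀ t : ℝ, Measurable fun ω => Y ω t) ∧
  (∀ᵐ ω ∂(volume : Measure Ω), ContinuousOn (Y ω) (Set.Ici t0) ∧ Y ω t0 = y0) ∧
  ∃ F : ℝ → MeasurableSpace Ω, Monotone F ∧ (∀ t, F t ≤ (inferInstance : MeasurableSpace Ω)) ∧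
    (∀ t : ℝ, t0 ≤ t → @Measurable Ω ℝ (F t) _ fun ω => Y ω t) ∧
    ∀ f : ℝ → ℝ, ContDiff ℝ 2 f → HasCompactSupport f →
      MartingaleFrom t0 F fun t ω =>
        f (Y ω t) - ∫ s in Set.Ioc t0 t,
          (b s (Y ω s) * deriv f (Y ω s) + a s (Y ω s) / 2 * iteratedDeriv 2 f (Y ω s))

/-- The stopping time `σ = inf{s > s0 ∨ t0 : Z(s) = Y(s) or Z(s) ∨ Y(s) = 2} ∧ 2`. -/
def besqSigma (t0 s0 : ℝ) (Y Z : ℝ → ℝ) : ℝ :=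
  sInf ({s : ℝ | max t0 s0 < s ∧ (Z s = Y s ∨ max (Z s) (Y s) = 2)} ∪ {2})

/-- The first meeting time `inf{s > s0 ∨ t0 : Z(s) = Y(s)}`, valued in `ℝ≥0∞`. -/
def besqMeet (t0 s0 : ℝ) (Y Z : ℝ → ℝ) : ℝ≥0∞ :=
  ⨅ s ∈ {s : ℝ | max t0 s0 < s ∧ Z s = Y s}, ENNReal.ofReal s

/-! Follow a diffusion along a moving interval `(lo, hi)`. For a large constant `lam`, the bump
`w u x = ((x - lo u) (hi u - x))₊³` multiplied by `exp (lam * u)` is a subsolution of the backward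
equation: near the edges a positive volatility or an inward drift makes the backward operator
nonnegative, and elsewhere in the interval `lam * w` dominates by compactness. Hence
`exp (lam * u) * E[w u (Y u); A]` is nondecreasing in `u` for every event `A` of the past, and as
`w` vanishes outside the interval, the paths found outside it at given times can be discarded
without lowering this quantity. So the diffusion stays in the interval with a probability bounded
below by a continuous positive function of its starting point.

A squared Bessel process of dimension `d > 0` is nondegenerate above `0` and has drift `d` at and
below `0`, so it can follow every interval whose lower edge moves up slower than `d` while it is
nonpositive. Let one process follow an interval ending above `1 / 2`, the other an interval ending
below `1 / 2`, the two intervals being the other way round at time `3 / 2`, both below level `2`: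
continuous paths following them cross between the times `3 / 2` and `2`.
-/

open scoped Topology

section PositivePart

theorem hasDerivAt_max_zero_pow (n : ℕ) (x : ℝ) :
    HasDerivAt (fun x : ℝ => max x 0 ^ (n + 2)) (((n + 2 : ℕ) : ℝ) * max x 0 ^ (n + 1)) x := by
  have left : HasDerivWithinAt (fun x : ℝ => max x 0 ^ (n + 2))
      (((n + 2 : ℕ) : ℝ) * max x 0 ^ (n + 1)) (Set.Iic 0) x := by
    by_cases hx : x ∈ Set.Iic 0
    · have zero_of_nonpos : ∀ y ∈ Set.Iic (0 : ℝ), max y 0 ^ (n + 2) = 0 := fun y hy => by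
        rw [max_eq_right hy, zero_pow (by lia)]
      rw [max_eq_right hx, zero_pow (by lia), mul_zero]
      exact (hasDerivWithinAt_const x _ (0 : ℝ)).congr_of_mem zero_of_nonpos hx
    · exact hasDerivWithinAt_iff_hasFDerivWithinAt.2
        (.of_notMem_closure (by rwa [isClosed_Iic.closure_eq]))
  have right : HasDerivWithinAt (fun x : ℝ => max x 0 ^ (n + 2))
      (((n + 2 : ℕ) : ℝ) * max x 0 ^ (n + 1)) (Set.Ici 0) x := by
    by_cases hx : x ∈ Set.Ici 0
    · rw [max_eq_left hx]
      exact (hasDerivAt_pow (n + 2) x).hasDerivWithinAt.congr_of_mem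
        (fun y hy => by rw [max_eq_left hy]) hx
    · exact hasDerivWithinAt_iff_hasFDerivWithinAt.2
        (.of_notMem_closure (by rwa [isClosed_Ici.closure_eq]))
  simpa only [Set.Iic_union_Ici, hasDerivWithinAt_univ] using left.union right

theorem contDiff_max_zero_pow (n : ℕ) : ContDiff ℝ n fun x : ℝ => max x 0 ^ (n + 1) := by
  induction n with
  | zero => exact contDiff_zero.2 (by fun_prop)
  | succ n ih =>
    rw [Nat.cast_succ, contDiff_succ_iff_deriv]
    refine ⟨fun x => (hasDerivAt_max_zero_pow n x).differentiableAt, by simp, ?_⟩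
    rw [funext fun x => (hasDerivAt_max_zero_pow n x).deriv]
    exact contDiff_const.mul ih

end PositivePart

section Generator

/-- The generator `b ∂ₓ + (a / 2) ∂ₓₓ` of the diffusion with drift `b` and squared volatility `a`,
at time `s`. -/
def generator (b a : ℝ → ℝ → ℝ) (f : ℝ → ℝ) (s x : ℝ) : ℝ :=
  b s x * deriv f x + a s x / 2 * iteratedDeriv 2 f x

variable {b a : ℝ → ℝ → ℝ} {f : ℝ → ℝ}

theorem continuous_generator (hb : Continuous (Function.uncurry b))
    (ha : Continuous (Function.uncurry a)) (hf : ContDiff ℝ 2 f) :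
    Continuous (Function.uncurry (generator b a f)) :=
  (hb.mul ((hf.continuous_deriv one_le_two).comp continuous_snd)).add
    ((ha.div_const 2).mul ((hf.continuous_iteratedDeriv 2 le_rfl).comp continuous_snd))

theorem generator_eq_zero_of_notMem_tsupport {s x : ℝ} (hx : x ∉ tsupport f) :
    generator b a f s x = 0 := by
  have zero_near := notMem_tsupport_iff_eventuallyEq.1 hx
  rw [generator, zero_near.deriv_eq, zero_near.iteratedDeriv_eq]
  simp

theorem exists_forall_abs_le_of_eq_zero {X Y : Type*} [TopologicalSpace X] [TopologicalSpace Y]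
    {g : X → Y → ℝ} {S : Set X} {K : Set Y} (hg : Continuous (Function.uncurry g))
    (hS : IsCompact S) (hK : IsCompact K) (hzero : ∀ x ∈ S, ∀ y ∉ K, g x y = 0) :
    ∃ C, 0 ≤ C ∧ ∀ x ∈ S, ∀ y, |g x y| ≤ C := by
  obtain ⟨C, hC⟩ := (hS.prod hK).exists_bound_of_continuousOn hg.continuousOn
  refine ⟨max C 0, le_max_right _ _, fun x hx y => ?_⟩
  by_cases hy : y ∈ K
  · exact (hC (x, y) ⟨hx, hy⟩).trans (le_max_left _ _)
  · simp [hzero x hx y hy]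

theorem exists_forall_abs_generator_le (hb : Continuous (Function.uncurry b))
    (ha : Continuous (Function.uncurry a)) (hf : ContDiff ℝ 2 f) (hfc : HasCompactSupport f)
    {S : Set ℝ} (hS : IsCompact S) : ∃ C, 0 ≤ C ∧ ∀ s ∈ S, ∀ x, |generator b a f s x| ≤ C :=
  exists_forall_abs_le_of_eq_zero (continuous_generator hb ha hf) hS hfc
    fun _ _ _ hx => generator_eq_zero_of_notMem_tsupport hx

end Generator

section Dynkin

/-- `IsDiffusionFrom` with the filtration exhibited and the starting value forgotten. -/
structure IsDiffusionWrt {Ω : Type*} [MeasureSpace Ω] (t0 : ℝ) (F : ℝ → MeasurableSpace Ω)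
    (b a : ℝ → ℝ → ℝ) (Y : Ω → ℝ → ℝ) : Prop where
  measurable : ∀ t : ℝ, Measurable fun ω => Y ω t
  ae_continuousOn : ∀ᵐ ω ∂(volume : Measure Ω), ContinuousOn (Y ω) (Set.Ici t0)
  mono : Monotone F
  le : ∀ t, F t ≤ (inferInstance : MeasurableSpace Ω)
  adapted : ∀ t, t0 ≤ t → Measurable[F t] fun ω => Y ω t
  martingaleFrom : ∀ f : ℝ → ℝ, ContDiff ℝ 2 f → HasCompactSupport f →
    MartingaleFrom t0 F fun t ω => f (Y ω t) - ∫ s in Set.Ioc t0 t, generator b a f s (Y ω s)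

variable {Ω : Type*} [MeasureSpace Ω] {t0 : ℝ} {b a : ℝ → ℝ → ℝ} {Y : Ω → ℝ → ℝ}

theorem IsDiffusionFrom.exists_isDiffusionWrt {y0 : ℝ} (hY : IsDiffusionFrom t0 b a y0 Y) :
    ∃ F, IsDiffusionWrt t0 F b a Y :=
  let ⟨measurable, start, F, mono, le, adapted, martingale⟩ := hY
  ⟨F, measurable, start.mono fun _ h => h.1, mono, le, adapted, martingale⟩

variable {F : ℝ → MeasurableSpace Ω} {f : ℝ → ℝ}

theorem integrable_comp_of_hasCompactSupport [IsFiniteMeasure (volume : Measure Ω)] {X : Ω → ℝ}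
    (hX : Measurable X) (hf : Continuous f) (hfc : HasCompactSupport f) :
    Integrable (fun ω => f (X ω)) (volume : Measure Ω) :=
  let ⟨C, hC⟩ := hfc.exists_bound_of_continuous hf
  .of_bound (hf.measurable.comp hX).aestronglyMeasurable C (.of_forall fun _ => hC _)

theorem setIntegral_eq_of_martingaleFrom {X : ℝ → Ω → ℝ} {u v : ℝ} {A : Set Ω}
    [IsFiniteMeasure (volume : Measure Ω)] (hX : MartingaleFrom t0 F X)
    (hF : ∀ t, F t ≤ (inferInstance : MeasurableSpace Ω)) (hu : t0 ≤ u) (huv : u ≤ v)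
    (hA : MeasurableSet[F u] A) : ∫ ω in A, X v ω = ∫ ω in A, X u ω := by
  rw [← setIntegral_condExp (hF u) (hX.1 v (hu.trans huv)) hA]
  exact setIntegral_congr_ae (hF u _ hA) ((hX.2 u v hu huv).mono fun _ h _ => h)

namespace IsDiffusionWrt

theorem ae_integral_generator_eq_sub (hY : IsDiffusionWrt t0 F b a Y)
    (hb : Continuous (Function.uncurry b)) (ha : Continuous (Function.uncurry a))
    (hf : ContDiff ℝ 2 f) {u v : ℝ} (hu : t0 ≤ u) (huv : u ≤ v) :
    ∀ᵐ ω ∂(volume : Measure Ω), ∫ s in u..v, generator b a f s (Y ω s) =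
      (∫ s in t0..v, generator b a f s (Y ω s)) - ∫ s in t0..u, generator b a f s (Y ω s) := by
  filter_upwards [hY.ae_continuousOn] with ω hω
  have cont : ContinuousOn (fun s => generator b a f s (Y ω s)) (Set.Ici t0) :=
    (continuous_generator hb ha hf).comp_continuousOn (continuousOn_id.prodMk hω)
  have integrable : ∀ r, t0 ≤ r →
      IntervalIntegrable (fun s => generator b a f s (Y ω s)) volume t0 r := fun r hr =>
    (cont.mono (by rw [Set.uIcc_of_le hr]; exact Set.Icc_subset_Ici_self)).intervalIntegrable
  exact (intervalIntegral.integral_interval_sub_left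
    (integrable v (hu.trans huv)) (integrable u hu)).symm

variable [IsFiniteMeasure (volume : Measure Ω)]

theorem integrable_integral_generator_initial (hY : IsDiffusionWrt t0 F b a Y) (hf : ContDiff ℝ 2 f)
    (hfc : HasCompactSupport f) {u : ℝ} (hu : t0 ≤ u) :
    Integrable (fun ω => ∫ s in t0..u, generator b a f s (Y ω s)) (volume : Measure Ω) := by
  have diff := (integrable_comp_of_hasCompactSupport (hY.measurable u) hf.continuous hfc).sub
    ((hY.martingaleFrom f hf hfc).1 u hu)
  refine diff.congr (.of_forall fun ω => ?_)
  simp only [Pi.sub_apply, sub_sub_cancel, intervalIntegral.integral_of_le hu]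

theorem integrable_integral_generator (hY : IsDiffusionWrt t0 F b a Y)
    (hb : Continuous (Function.uncurry b)) (ha : Continuous (Function.uncurry a))
    (hf : ContDiff ℝ 2 f) (hfc : HasCompactSupport f) {u v : ℝ} (hu : t0 ≤ u) (huv : u ≤ v) :
    Integrable (fun ω => ∫ s in u..v, generator b a f s (Y ω s)) (volume : Measure Ω) :=
  ((hY.integrable_integral_generator_initial hf hfc (hu.trans huv)).sub
    (hY.integrable_integral_generator_initial hf hfc hu)).congr
      ((hY.ae_integral_generator_eq_sub hb ha hf hu huv).mono fun _ h => h.symm)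

theorem setIntegral_comp_eq_add (hY : IsDiffusionWrt t0 F b a Y)
    (hb : Continuous (Function.uncurry b)) (ha : Continuous (Function.uncurry a))
    (hf : ContDiff ℝ 2 f) (hfc : HasCompactSupport f) {u v : ℝ} (hu : t0 ≤ u) (huv : u ≤ v)
    {A : Set Ω} (hA : MeasurableSet[F u] A) :
    ∫ ω in A, f (Y ω v) =
      (∫ ω in A, f (Y ω u)) + ∫ ω in A, ∫ s in u..v, generator b a f s (Y ω s) := by
  have hv := hu.trans huv
  have integrable_f := fun r =>
    integrable_comp_of_hasCompactSupport (hY.measurable r) hf.continuous hfc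
  have integrable_gen := fun r (hr : t0 ≤ r) => hY.integrable_integral_generator_initial hf hfc hr
  have martingale := setIntegral_eq_of_martingaleFrom (hY.martingaleFrom f hf hfc) hY.le hu huv hA
  simp only [← intervalIntegral.integral_of_le hu, ← intervalIntegral.integral_of_le hv]
    at martingale
  rw [integral_sub (integrable_f v).integrableOn (integrable_gen v hv).integrableOn,
    integral_sub (integrable_f u).integrableOn (integrable_gen u hu).integrableOn] at martingale
  rw [integral_congr_ae (ae_restrict_of_ae (hY.ae_integral_generator_eq_sub hb ha hf hu huv)),
    integral_sub (integrable_gen v hv).integrableOn (integrable_gen u hu).integrableOn]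
  linarith

end IsDiffusionWrt

end Dynkin

section OneSidedDerivatives

theorem hasDerivWithinAt_integral_of_abs_sub_le {Ω : Type*} [MeasurableSpace Ω] {μ : Measure Ω}
    [IsFiniteMeasure μ] {h : ℝ → Ω → ℝ} {h' : Ω → ℝ} {u t C : ℝ} (hut : u < t)
    (hint : ∀ v ∈ Set.Icc u t, Integrable (h v) μ)
    (hlip : ∀ v ∈ Set.Ioc u t, ∀ᵐ ω ∂μ, |h v ω - h u ω| ≤ C * (v - u))
    (hderiv : ∀ᵐ ω ∂μ, HasDerivWithinAt (h · ω) (h' ω) (Set.Ici u) u) :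
    HasDerivWithinAt (fun v => ∫ ω, h v ω ∂μ) (∫ ω, h' ω ∂μ) (Set.Ici u) u := by
  have near : Set.Ioc u t ∈ 𝓝[>] u := Ioc_mem_nhdsGT hut
  have integrable_u := hint u (Set.left_mem_Icc.2 hut.le)
  rw [← hasDerivWithinAt_Ioi_iff_Ici, hasDerivWithinAt_iff_tendsto_slope' Set.self_notMem_Ioi]
  have slope_integral : (fun v => ∫ ω, slope (h · ω) u v ∂μ) =ᶠ[𝓝[>] u]
      slope (fun v => ∫ ω, h v ω ∂μ) u := by
    filter_upwards [near] with v hv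
    simp only [slope_def_field]
    rw [integral_div, integral_sub (hint v ⟨hv.1.le, hv.2⟩) integrable_u]
  refine Tendsto.congr' slope_integral
    (tendsto_integral_filter_of_dominated_convergence (fun _ => C) ?_ ?_ (integrable_const C) ?_)
  · filter_upwards [near] with v hv
    simp only [slope_def_field]
    exact (((hint v ⟨hv.1.le, hv.2⟩).sub integrable_u).div_const _).aestronglyMeasurable
  · filter_upwards [near] with v hv
    filter_upwards [hlip v hv] with ω hω
    rw [slope_def_field, Real.norm_eq_abs, abs_div, abs_of_pos (sub_pos.2 hv.1)]
    exact div_le_of_le_mul₀ (sub_pos.2 hv.1).le (nonneg_of_mul_nonneg_left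
      ((abs_nonneg _).trans hω) (sub_pos.2 hv.1)) hω
  · filter_upwards [hderiv] with ω hω
    rwa [← hasDerivWithinAt_Ioi_iff_Ici,
      hasDerivWithinAt_iff_tendsto_slope' Set.self_notMem_Ioi] at hω

theorem hasDerivWithinAt_integral_right_of_continuousOn {g : ℝ → ℝ} {u : ℝ}
    (hg : ContinuousOn g (Set.Ici u)) :
    HasDerivWithinAt (fun v => ∫ r in u..v, g r) (g u) (Set.Ici u) u :=
  intervalIntegral.integral_hasDerivWithinAt_right .refl
    ((hg.mono Set.Ioi_subset_Ici_self).stronglyMeasurableAtFilter_nhdsWithin measurableSet_Ioi u)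
    ((hg u Set.self_mem_Ici).mono Set.Ioi_subset_Ici_self)

variable {w : ℝ → ℝ → ℝ}

theorem hasDerivAt_of_contDiff_uncurry (hw : ContDiff ℝ 1 (Function.uncurry w)) (u x : ℝ) :
    HasDerivAt (fun r => w r x) (fderiv ℝ (Function.uncurry w) (u, x) (1, 0)) u :=
  (hw.differentiable one_ne_zero (u, x)).hasFDerivAt.comp_hasDerivAt (f := fun r => (r, x)) u
    ((hasDerivAt_id' u).prodMk (hasDerivAt_const u x))

theorem continuous_deriv_of_contDiff_uncurry (hw : ContDiff ℝ 1 (Function.uncurry w)) :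
    Continuous (Function.uncurry fun u x => deriv (fun r => w r x) u) := by
  have deriv_eq : (Function.uncurry fun u x => deriv (fun r => w r x) u) =
      fun p => fderiv ℝ (Function.uncurry w) p (1, 0) :=
    funext fun p => (hasDerivAt_of_contDiff_uncurry hw p.1 p.2).deriv
  rw [deriv_eq]
  exact (hw.continuous_fderiv one_ne_zero).clm_apply continuous_const

theorem hasDerivWithinAt_sub_along_path (hw : ContDiff ℝ 1 (Function.uncurry w)) {y : ℝ → ℝ}
    {u : ℝ} {S : Set ℝ} (hy : ContinuousWithinAt y S u) :
    HasDerivWithinAt (fun v => w v (y v) - w u (y v)) (deriv (fun r => w r (y u)) u) S u := by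
  -- `y` is merely continuous, so strict differentiability of `w` at `(u, y u)` is needed.
  have strict := (hw.contDiffAt (x := (u, y u))).hasStrictFDerivAt one_ne_zero
  have pair : Tendsto (fun v => ((v, y v), (u, y v))) (𝓝[S] u) (𝓝 ((u, y u), (u, y u))) :=
    (continuousWithinAt_id.prodMk hy).prodMk_nhds (continuousWithinAt_const.prodMk hy)
  rw [hasDerivWithinAt_iff_isLittleO, (hasDerivAt_of_contDiff_uncurry hw u (y u)).deriv]
  refine ((strict.isLittleO.comp_tendsto pair).congr_left fun v => ?_).trans_isBigO
    (Asymptotics.isBigO_of_le _ fun v => ?_)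
  · have increment : ((v, y v) - (u, y v) : ℝ × ℝ) = (v - u) • (1, 0) := by simp
    simp only [Function.comp_apply, increment, map_smul, Function.uncurry_apply_pair, sub_self,
      sub_zero]
  · simp

end OneSidedDerivatives

section Growth

/-- `w` is a nonnegative space-time test function on `[s, t] × ℝ`, with compact support in space,
for which `e^{lam u} w(u, x)` is a subsolution of the backward equation
`∂ᵤ + b ∂ₓ + (a / 2) ∂ₓₓ = 0`. -/
structure IsSubsolution (b a : ℝ → ℝ → ℝ) (w : ℝ → ℝ → ℝ) (lam s t : ℝ) : Prop where
  contDiff : ContDiff ℝ 1 (Function.uncurry w)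
  contDiff_space : ∀ u ∈ Set.Icc s t, ContDiff ℝ 2 (w u)
  nonneg : ∀ u ∈ Set.Icc s t, ∀ x, 0 ≤ w u x
  support : ∃ K, IsCompact K ∧ ∀ u ∈ Set.Icc s t, ∀ x ∉ K, w u x = 0
  backward_nonneg : ∀ u ∈ Set.Icc s t, ∀ x,
    0 ≤ lam * w u x + (generator b a (w u) u x + deriv (fun r => w r x) u)

/-- The change of `w` along the path `Y ω` from time `u` to time `v`, with the martingale part of
`w(u, Y)` removed. -/
def increment {Ω : Type*} (b a w : ℝ → ℝ → ℝ) (Y : Ω → ℝ → ℝ) (u v : ℝ) (ω : Ω) : ℝ :=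
  (∫ r in u..v, generator b a (w u) r (Y ω r)) + (w v (Y ω v) - w u (Y ω v))

theorem increment_self {Ω : Type*} (b a w : ℝ → ℝ → ℝ) (Y : Ω → ℝ → ℝ) (u : ℝ) (ω : Ω) :
    increment b a w Y u u ω = 0 := by
  simp [increment]

/-- The event that the process `Y` is in the positivity set of `w` at every time of `S`. -/
def aliveOn {Ω : Type*} (w : ℝ → ℝ → ℝ) (Y : Ω → ℝ → ℝ) (S : Set ℝ) : Set Ω :=
  {ω | ∀ u ∈ S, 0 < w u (Y ω u)}

theorem aliveOn_anti {Ω : Type*} {w : ℝ → ℝ → ℝ} {Y : Ω → ℝ → ℝ} {S T : Set ℝ} (h : S ⊆ T) :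
    aliveOn w Y T ⊆ aliveOn w Y S :=
  fun _ hω u hu => hω u (h hu)

theorem measurableSet_aliveOn {Ω : Type*} {_ : MeasurableSpace Ω} {w : ℝ → ℝ → ℝ}
    {Y : Ω → ℝ → ℝ} {S : Set ℝ} (hw : ∀ u, Continuous (w u)) (hS : S.Countable)
    (hY : ∀ u ∈ S, Measurable fun ω => Y ω u) : MeasurableSet (aliveOn w Y S) := by
  simp only [aliveOn, Set.ofPred_forall]
  exact .biInter hS fun u hu =>
    measurableSet_lt measurable_const ((hw u).measurable.comp (hY u hu))

namespace IsSubsolution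

variable {b a w : ℝ → ℝ → ℝ} {lam s t : ℝ}

theorem mono {s' t' : ℝ} (h : IsSubsolution b a w lam s t) (hs : s ≤ s') (ht : t' ≤ t) :
    IsSubsolution b a w lam s' t' :=
  have sub : Set.Icc s' t' ⊆ Set.Icc s t := Set.Icc_subset_Icc hs ht
  let ⟨K, hK, hzero⟩ := h.support
  ⟨h.contDiff, fun u hu => h.contDiff_space u (sub hu), fun u hu => h.nonneg u (sub hu),
    ⟨K, hK, fun u hu => hzero u (sub hu)⟩, fun u hu => h.backward_nonneg u (sub hu)⟩

theorem continuous (h : IsSubsolution b a w lam s t) (u : ℝ) : Continuous (w u) :=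
  h.contDiff.continuous.comp (Continuous.prodMk_right u)

theorem hasCompactSupport (h : IsSubsolution b a w lam s t) {u : ℝ} (hu : u ∈ Set.Icc s t) :
    HasCompactSupport (w u) :=
  let ⟨_, hK, hzero⟩ := h.support
  .intro hK (hzero u hu)

theorem exists_forall_abs_le (h : IsSubsolution b a w lam s t) :
    ∃ C, 0 ≤ C ∧ ∀ u ∈ Set.Icc s t, ∀ x, |w u x| ≤ C :=
  let ⟨_, hK, hzero⟩ := h.support
  exists_forall_abs_le_of_eq_zero h.contDiff.continuous isCompact_Icc hK hzero

theorem exists_forall_abs_deriv_le (h : IsSubsolution b a w lam s t) (hst : s < t) :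
    ∃ C, 0 ≤ C ∧ ∀ u ∈ Set.Icc s t, ∀ x, |deriv (fun r => w r x) u| ≤ C := by
  obtain ⟨K, hK, hzero⟩ := h.support
  refine exists_forall_abs_le_of_eq_zero (continuous_deriv_of_contDiff_uncurry h.contDiff)
    isCompact_Icc hK fun u hu x hx => ?_
  have zero_deriv : HasDerivWithinAt (fun r => w r x) 0 (Set.Icc s t) u :=
    (hasDerivWithinAt_const u _ (0 : ℝ)).congr_of_mem (fun r hr => hzero r hr x hx) hu
  rw [(hasDerivAt_of_contDiff_uncurry h.contDiff u x).deriv]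
  exact (uniqueDiffOn_Icc hst u hu).eq_deriv _
    (hasDerivAt_of_contDiff_uncurry h.contDiff u x).hasDerivWithinAt zero_deriv

theorem abs_sub_le {C : ℝ} (h : IsSubsolution b a w lam s t)
    (hC : ∀ u ∈ Set.Icc s t, ∀ x, |deriv (fun r => w r x) u| ≤ C) {u v : ℝ} (hu : s ≤ u)
    (huv : u ≤ v) (hv : v ≤ t) (x : ℝ) : |w v x - w u x| ≤ C * (v - u) := by
  have lip := (convex_Icc s t).norm_image_sub_le_of_norm_deriv_le (f := fun r => w r x)
    (fun r _ => (hasDerivAt_of_contDiff_uncurry h.contDiff r x).differentiableAt)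
    (fun r hr => hC r hr x) ⟨hu, huv.trans hv⟩ ⟨hu.trans huv, hv⟩
  simpa only [Real.norm_eq_abs, abs_of_nonneg (sub_nonneg.2 huv)] using lip

variable {Ω : Type*} {Y : Ω → ℝ → ℝ}

theorem exists_forall_abs_increment_le (h : IsSubsolution b a w lam s t)
    (hb : Continuous (Function.uncurry b)) (ha : Continuous (Function.uncurry a)) {u : ℝ}
    (hu : u ∈ Set.Ico s t) :
    ∃ C, ∀ v ∈ Set.Ioc u t, ∀ ω, |increment b a w Y u v ω| ≤ C * (v - u) := by
  have hu' := Set.Ico_subset_Icc_self hu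
  obtain ⟨C, -, hC⟩ := h.exists_forall_abs_deriv_le (hu.1.trans_lt hu.2)
  obtain ⟨D, -, hD⟩ := exists_forall_abs_generator_le hb ha (h.contDiff_space u hu')
    (h.hasCompactSupport hu') (isCompact_Icc (a := u) (b := t))
  refine ⟨D + C, fun v hv ω => ?_⟩
  have gen_le := intervalIntegral.norm_integral_le_of_norm_le_const (a := u) (b := v)
    (f := fun r => generator b a (w u) r (Y ω r)) (C := D) fun r hr => by
      rw [Set.uIoc_of_le hv.1.le] at hr
      exact hD r ⟨hr.1.le, hr.2.trans hv.2⟩ _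
  rw [abs_of_pos (sub_pos.2 hv.1)] at gen_le
  rw [add_mul]
  exact (abs_add_le _ _).trans
    (add_le_add gen_le (h.abs_sub_le hC hu.1 hv.1.le hv.2 (Y ω v)))

variable [MeasureSpace Ω] {t0 : ℝ} {F : ℝ → MeasurableSpace Ω} {A : Set Ω}

theorem ae_hasDerivWithinAt_increment (h : IsSubsolution b a w lam s t)
    (hb : Continuous (Function.uncurry b)) (ha : Continuous (Function.uncurry a))
    (hY : IsDiffusionWrt t0 F b a Y) {u : ℝ} (hu0 : t0 ≤ u) (hu : u ∈ Set.Icc s t) :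
    ∀ᵐ ω ∂(volume : Measure Ω), HasDerivWithinAt (increment b a w Y u · ω)
      (generator b a (w u) u (Y ω u) + deriv (fun r => w r (Y ω u)) u) (Set.Ici u) u := by
  filter_upwards [hY.ae_continuousOn] with ω hω
  have path : ContinuousOn (Y ω) (Set.Ici u) := hω.mono (Set.Ici_subset_Ici.2 hu0)
  exact (hasDerivWithinAt_integral_right_of_continuousOn
    ((continuous_generator hb ha (h.contDiff_space u hu)).comp_continuousOn
      (continuousOn_id.prodMk path))).add
    (hasDerivWithinAt_sub_along_path h.contDiff (path u Set.self_mem_Ici))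

theorem setIntegral_aliveOn_insert (h : IsSubsolution b a w lam s t) {u : ℝ}
    (hu : u ∈ Set.Icc s t) {S : Set ℝ} (hS : MeasurableSet (aliveOn w Y S)) :
    ∫ ω in aliveOn w Y (insert u S), w u (Y ω u) = ∫ ω in aliveOn w Y S, w u (Y ω u) := by
  refine (setIntegral_eq_of_subset_of_forall_sdiff_eq_zero hS
    (aliveOn_anti (Set.subset_insert u S)) fun ω hω => ?_).symm
  refine ((h.nonneg u hu _).eq_or_lt.resolve_right fun hpos => hω.2 fun r hr => ?_).symm
  rcases hr with rfl | hr
  exacts [hpos, hω.1 r hr]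

variable [IsFiniteMeasure (volume : Measure Ω)]

theorem integrable_comp (h : IsSubsolution b a w lam s t) {u : ℝ} (hu : u ∈ Set.Icc s t)
    {X : Ω → ℝ} (hX : Measurable X) : Integrable (fun ω => w u (X ω)) (volume : Measure Ω) :=
  integrable_comp_of_hasCompactSupport hX (h.continuous u) (h.hasCompactSupport hu)

theorem continuousOn_setIntegral (h : IsSubsolution b a w lam s t)
    (hY : IsDiffusionWrt t0 F b a Y) (hs : t0 ≤ s) :
    ContinuousOn (fun u => ∫ ω in A, w u (Y ω u)) (Set.Icc s t) := by
  obtain ⟨C, -, hC⟩ := h.exists_forall_abs_le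
  refine continuousOn_of_dominated (bound := fun _ => C)
    (fun u hu => (h.integrable_comp hu (hY.measurable u)).aestronglyMeasurable.restrict)
    (fun u hu => .of_forall fun ω => hC u hu _) (integrable_const C) ?_
  filter_upwards [ae_restrict_of_ae hY.ae_continuousOn] with ω hω
  exact h.contDiff.continuous.comp_continuousOn
    (continuousOn_id.prodMk (hω.mono fun u hu => hs.trans hu.1))

theorem integrable_increment (h : IsSubsolution b a w lam s t)
    (hb : Continuous (Function.uncurry b)) (ha : Continuous (Function.uncurry a))
    (hY : IsDiffusionWrt t0 F b a Y) {u v : ℝ} (hu0 : t0 ≤ u) (hu : s ≤ u) (huv : u ≤ v)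
    (hv : v ≤ t) : Integrable (increment b a w Y u v) (volume : Measure Ω) :=
  (hY.integrable_integral_generator hb ha (h.contDiff_space u ⟨hu, huv.trans hv⟩)
    (h.hasCompactSupport ⟨hu, huv.trans hv⟩) hu0 huv).add
      ((h.integrable_comp ⟨hu.trans huv, hv⟩ (hY.measurable v)).sub
        (h.integrable_comp ⟨hu, huv.trans hv⟩ (hY.measurable v)))

theorem setIntegral_eq_add_increment (h : IsSubsolution b a w lam s t)
    (hb : Continuous (Function.uncurry b)) (ha : Continuous (Function.uncurry a))
    (hY : IsDiffusionWrt t0 F b a Y) {u v : ℝ} (hu0 : t0 ≤ u) (hu : s ≤ u) (huv : u ≤ v)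
    (hv : v ≤ t) (hA : MeasurableSet[F u] A) :
    ∫ ω in A, w v (Y ω v) =
      (∫ ω in A, w u (Y ω u)) + ∫ ω in A, increment b a w Y u v ω := by
  have hu' : u ∈ Set.Icc s t := ⟨hu, huv.trans hv⟩
  have smooth := h.contDiff_space u hu'
  have compact := h.hasCompactSupport hu'
  have integrable_u := (h.integrable_comp hu' (hY.measurable v)).integrableOn (s := A)
  have integrable_v :=
    (h.integrable_comp ⟨hu.trans huv, hv⟩ (hY.measurable v)).integrableOn (s := A)
  have integrable_gen :=
    (hY.integrable_integral_generator hb ha smooth compact hu0 huv).integrableOn (s := A)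
  have integrable_sub : IntegrableOn (fun ω => w v (Y ω v) - w u (Y ω v)) A volume :=
    integrable_v.sub integrable_u
  simp only [increment]
  rw [integral_add integrable_gen integrable_sub, ← add_assoc,
    ← hY.setIntegral_comp_eq_add hb ha smooth compact hu0 huv hA,
    integral_sub integrable_v integrable_u, add_sub_cancel]

theorem hasDerivWithinAt_setIntegral (h : IsSubsolution b a w lam s t)
    (hb : Continuous (Function.uncurry b)) (ha : Continuous (Function.uncurry a))
    (hY : IsDiffusionWrt t0 F b a Y) {u : ℝ} (hu0 : t0 ≤ u) (hu : u ∈ Set.Ico s t)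
    (hA : MeasurableSet[F u] A) :
    HasDerivWithinAt (fun v => ∫ ω in A, w v (Y ω v))
      (∫ ω in A, (generator b a (w u) u (Y ω u) + deriv (fun r => w r (Y ω u)) u))
      (Set.Ici u) u := by
  have hu' := Set.Ico_subset_Icc_self hu
  obtain ⟨C, hC⟩ := h.exists_forall_abs_increment_le hb ha hu (Y := Y)
  have deriv_increment := hasDerivWithinAt_integral_of_abs_sub_le (μ := volume.restrict A) hu.2
    (fun v hv => (h.integrable_increment hb ha hY hu0 hu.1 hv.1 hv.2).integrableOn)
    (fun v hv => .of_forall fun ω => by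
      simpa only [increment_self, sub_zero] using hC v hv ω)
    (ae_restrict_of_ae (h.ae_hasDerivWithinAt_increment hb ha hY hu0 hu'))
  refine (deriv_increment.const_add (∫ ω in A, w u (Y ω u))).congr_of_eventuallyEq_of_mem
    ?_ Set.self_mem_Ici
  filter_upwards [Icc_mem_nhdsGE hu.2] with v hv
  exact h.setIntegral_eq_add_increment hb ha hY hu0 hu.1 hv.1 hv.2 hA

theorem neg_mul_setIntegral_le (h : IsSubsolution b a w lam s t)
    (hb : Continuous (Function.uncurry b)) (ha : Continuous (Function.uncurry a))
    (hst : s < t) {u : ℝ} (hu : u ∈ Set.Icc s t) {X : Ω → ℝ} (hX : Measurable X) :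
    -lam * (∫ ω in A, w u (X ω)) ≤
      ∫ ω in A, (generator b a (w u) u (X ω) + deriv (fun r => w r (X ω)) u) := by
  have smooth := h.contDiff_space u hu
  obtain ⟨C, -, hC⟩ := h.exists_forall_abs_deriv_le hst
  obtain ⟨D, -, hD⟩ := exists_forall_abs_generator_le hb ha smooth (h.hasCompactSupport hu)
    (isCompact_singleton (x := u))
  have cont : Continuous fun x => generator b a (w u) u x + deriv (fun r => w r x) u :=
    ((continuous_generator hb ha smooth).comp (Continuous.prodMk_right u)).add
      ((continuous_deriv_of_contDiff_uncurry h.contDiff).comp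
        (Continuous.prodMk_right u))
  rw [← integral_const_mul]
  refine integral_mono ((h.integrable_comp hu hX).const_mul (-lam)).integrableOn
    (Integrable.of_bound (cont.measurable.comp hX).aestronglyMeasurable (D + C) (.of_forall
      fun ω => (abs_add_le _ _).trans (add_le_add (hD u rfl _) (hC u hu _)))) fun ω => ?_
  linarith [h.backward_nonneg u hu (X ω)]

theorem exp_mul_setIntegral_le (h : IsSubsolution b a w lam s t)
    (hb : Continuous (Function.uncurry b)) (ha : Continuous (Function.uncurry a))
    (hY : IsDiffusionWrt t0 F b a Y) (hs : t0 ≤ s) (hst : s ≤ t) (hA : MeasurableSet[F s] A) :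
    Real.exp (-lam * (t - s)) * (∫ ω in A, w s (Y ω s)) ≤ ∫ ω in A, w t (Y ω t) := by
  rcases hst.eq_or_lt with rfl | hst
  · simp
  have gronwall := le_gronwallBound_of_liminf_deriv_right_le
    (f := fun u => -∫ ω in A, w u (Y ω u))
    (h.continuousOn_setIntegral hY hs).neg
    (fun u hu r hr => (h.hasDerivWithinAt_setIntegral hb ha hY (hs.trans hu.1) hu
      (hY.mono hu.1 _ hA)).neg.liminf_right_slope_le hr) le_rfl
    (K := -lam) (ε := 0) (fun u hu => by
      linarith [h.neg_mul_setIntegral_le (A := A) hb ha hst (Set.Ico_subset_Icc_self hu)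
        (hY.measurable u)])
    t (Set.right_mem_Icc.2 hst.le)
  rw [gronwallBound_ε0] at gronwall
  linarith

/-- Paths leaving the positivity set of `w` at a time of `S` can be discarded at no cost, because
`w` vanishes at that moment. -/
theorem exp_mul_integral_le_of_finset (h : IsSubsolution b a w lam s t)
    (hb : Continuous (Function.uncurry b)) (ha : Continuous (Function.uncurry a))
    (hY : IsDiffusionWrt t0 F b a Y) (hs : t0 ≤ s) (S : Finset ℝ) :
    ∀ v ∈ Set.Icc s t, ↑S ⊆ Set.Icc s v → Real.exp (-lam * (v - s)) * (∫ ω, w s (Y ω s)) ≤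
      ∫ ω in aliveOn w Y S, w v (Y ω v) := by
  induction S using Finset.induction_on_max with
  | empty =>
    intro v hv _
    simpa [aliveOn] using
      (h.mono le_rfl hv.2).exp_mul_setIntegral_le hb ha hY hs hv.1 MeasurableSet.univ
  | insert u S hmax ih =>
    intro v hv hS
    rw [Finset.coe_insert] at hS ⊢
    have hu : u ∈ Set.Icc s v := hS (Set.mem_insert u _)
    have hSu : insert u (S : Set ℝ) ⊆ Set.Icc s u := Set.insert_subset ⟨hu.1, le_rfl⟩
      fun r hr => ⟨(hS (Set.mem_insert_of_mem u hr)).1, (hmax r hr).le⟩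
    have alive_insert : MeasurableSet[F u] (aliveOn w Y (insert u S)) :=
      measurableSet_aliveOn h.continuous (S.countable_toSet.insert u) fun r hr =>
        (hY.adapted r (hs.trans (hSu hr).1)).mono (hY.mono (hSu hr).2) le_rfl
    have alive : MeasurableSet (aliveOn w Y S) :=
      measurableSet_aliveOn h.continuous S.countable_toSet fun r _ => hY.measurable r
    calc Real.exp (-lam * (v - s)) * (∫ ω, w s (Y ω s))
        = Real.exp (-lam * (v - u)) * (Real.exp (-lam * (u - s)) * ∫ ω, w s (Y ω s)) := by
          rw [← mul_assoc, ← Real.exp_add]; ring_nf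
      _ ≤ Real.exp (-lam * (v - u)) * ∫ ω in aliveOn w Y (insert u S), w u (Y ω u) := by
          rw [h.setIntegral_aliveOn_insert ⟨hu.1, hu.2.trans hv.2⟩ alive]
          gcongr
          exact ih u ⟨hu.1, hu.2.trans hv.2⟩ ((Set.subset_insert u _).trans hSu)
      _ ≤ _ := (h.mono hu.1 hv.2).exp_mul_setIntegral_le hb ha hY (hs.trans hu.1) hu.2
          alive_insert

theorem exp_mul_integral_le_of_countable (h : IsSubsolution b a w lam s t)
    (hb : Continuous (Function.uncurry b)) (ha : Continuous (Function.uncurry a))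
    (hY : IsDiffusionWrt t0 F b a Y) (hs : t0 ≤ s) (hst : s ≤ t) {S : Set ℝ} (hS : S.Countable)
    (hsub : S ⊆ Set.Icc s t) : Real.exp (-lam * (t - s)) * (∫ ω, w s (Y ω s)) ≤
      ∫ ω in aliveOn w Y S, w t (Y ω t) := by
  have ht := Set.right_mem_Icc.2 hst
  have finite_bound := h.exp_mul_integral_le_of_finset hb ha hY hs
  rcases S.eq_empty_or_nonempty with rfl | hne
  · simpa using finite_bound ∅ t ht (by simp)
  obtain ⟨e, rfl⟩ := hS.exists_eq_range hne
  let T : ℕ → Finset ℝ := fun n => (Finset.range (n + 1)).image e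
  have T_sub : ∀ n, ↑(T n) ⊆ Set.Icc s t := fun n => by
    simp only [T, Finset.coe_image]; exact (Set.image_subset_range _ _).trans hsub
  have inter_eq : ⋂ n, aliveOn w Y (T n) = aliveOn w Y (Set.range e) := by
    ext ω
    simp only [T, aliveOn, Set.mem_iInter, Set.mem_ofPred_eq, Finset.coe_image,
      Set.forall_mem_image, Set.forall_mem_range, Finset.coe_range, Set.mem_Iio]
    exact ⟨fun hω n => hω n (Nat.lt_succ_self n), fun hω _ n _ => hω n⟩
  have limit := tendsto_setIntegral_of_antitone (μ := (volume : Measure Ω))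
    (fun n => measurableSet_aliveOn h.continuous (T n).countable_toSet fun u _ => hY.measurable u)
    (fun m n hmn => aliveOn_anti (w := w) (Y := Y) (Finset.coe_subset.2
      (Finset.image_subset_image (Finset.range_mono (Nat.succ_le_succ hmn)))))
    ⟨0, (h.integrable_comp ht (hY.measurable t)).integrableOn⟩
  rw [inter_eq] at limit
  exact ge_of_tendsto' limit fun n => finite_bound (T n) t ht (T_sub n)

end IsSubsolution

theorem IsSubsolution.exp_mul_le_measureReal {b a w : ℝ → ℝ → ℝ} {lam t0 t y0 C : ℝ}
    {Ω : Type*} [MeasureSpace Ω] [IsProbabilityMeasure (volume : Measure Ω)] {Y : Ω → ℝ → ℝ}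
    (h : IsSubsolution b a w lam t0 t) (hb : Continuous (Function.uncurry b))
    (ha : Continuous (Function.uncurry a)) (hY : IsDiffusionFrom t0 b a y0 Y) (ht : t0 ≤ t)
    (hC : ∀ x, |w t x| ≤ C) {S : Set ℝ} (hS : S.Countable) (hsub : S ⊆ Set.Icc t0 t) :
    Real.exp (-lam * (t - t0)) * w t0 y0 ≤ C * volume.real (aliveOn w Y S) := by
  obtain ⟨F, hF⟩ := hY.exists_isDiffusionWrt
  have start : ∫ ω, w t0 (Y ω t0) = w t0 y0 := by
    rw [integral_congr_ae (hY.2.1.mono fun ω hω => congrArg (w t0) hω.2)]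
    simp
  calc Real.exp (-lam * (t - t0)) * w t0 y0
      ≤ ∫ ω in aliveOn w Y S, w t (Y ω t) := by
        rw [← start]
        exact h.exp_mul_integral_le_of_countable hb ha hF le_rfl ht hS hsub
    _ ≤ C * volume.real (aliveOn w Y S) :=
        (Real.le_norm_self _).trans
          (norm_setIntegral_le_of_norm_le_const (measure_lt_top _ _) fun ω _ => hC _)

end Growth

section Tube

/-- The moving interval `(lo u, hi u)`, `u ∈ I`, can be followed by the diffusion with drift `b` and
squared volatility `a`: at each edge either the diffusion is nondegenerate or the drift points
into the interval, relative to the speed of the edge. -/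
structure IsTube (b a : ℝ → ℝ → ℝ) (lo hi : ℝ → ℝ) (I : Set ℝ) : Prop where
  contDiff_lo : ContDiff ℝ 1 lo
  contDiff_hi : ContDiff ℝ 1 hi
  lt : ∀ u ∈ I, lo u < hi u
  lower_edge : ∀ u ∈ I, 0 < a u (lo u) ∨ deriv lo u < b u (lo u)
  upper_edge : ∀ u ∈ I, 0 < a u (hi u) ∨ b u (hi u) < deriv hi u

/-- The bump `((x - lo u) (hi u - x))₊³`, positive exactly inside the moving interval. The exponent
`3` makes it twice continuously differentiable in `x`. -/
def tubeBump (lo hi : ℝ → ℝ) (u x : ℝ) : ℝ :=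
  max ((x - lo u) * (hi u - x)) 0 ^ 3

/-- The backward operator applied to `tubeBump`, divided by `max ((x - lo u) * (hi u - x)) 0`. -/
def tubeBumpRate (b a : ℝ → ℝ → ℝ) (lo hi : ℝ → ℝ) (u x : ℝ) : ℝ :=
  3 * max ((x - lo u) * (hi u - x)) 0 *
      ((x - lo u) * deriv hi u - deriv lo u * (hi u - x) + b u x * (lo u + hi u - 2 * x)) +
    3 * a u x * ((lo u + hi u - 2 * x) ^ 2 - max ((x - lo u) * (hi u - x)) 0)

variable {b a : ℝ → ℝ → ℝ} {lo hi : ℝ → ℝ} {u x : ℝ}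

theorem tubeBump_nonneg (lo hi : ℝ → ℝ) (u x : ℝ) : 0 ≤ tubeBump lo hi u x :=
  pow_nonneg (le_max_right _ _) 3

theorem tubeBump_pos_iff (h : lo u ≤ hi u) :
    0 < tubeBump lo hi u x ↔ x ∈ Set.Ioo (lo u) (hi u) := by
  rw [tubeBump, Odd.pow_pos_iff (by decide), lt_max_iff, or_iff_left (lt_irrefl 0), mul_pos_iff,
    sub_pos, sub_pos, sub_neg, sub_neg, or_iff_left fun hx => (hx.2.trans hx.1).not_ge h,
    Set.mem_Ioo]

theorem tubeBump_eq_zero_iff (h : lo u ≤ hi u) :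
    tubeBump lo hi u x = 0 ↔ x ∉ Set.Ioo (lo u) (hi u) := by
  rw [← tubeBump_pos_iff h, not_lt, le_antisymm_iff, and_iff_left (tubeBump_nonneg lo hi u x)]

theorem contDiff_uncurry_tubeBump (hlo : ContDiff ℝ 1 lo) (hhi : ContDiff ℝ 1 hi) :
    ContDiff ℝ 1 (Function.uncurry (tubeBump lo hi)) :=
  ((contDiff_max_zero_pow 2).of_le (by norm_num)).comp
    ((contDiff_snd.sub (hlo.comp contDiff_fst)).mul ((hhi.comp contDiff_fst).sub contDiff_snd))

theorem contDiff_tubeBump (lo hi : ℝ → ℝ) (u : ℝ) : ContDiff ℝ 2 (tubeBump lo hi u) :=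
  (contDiff_max_zero_pow 2).comp
    ((contDiff_id.sub contDiff_const).mul (contDiff_const.sub contDiff_id))

theorem hasDerivAt_sub_mul_sub (α β x : ℝ) :
    HasDerivAt (fun x => (x - α) * (β - x)) (α + β - 2 * x) x := by
  refine (((hasDerivAt_id' x).sub_const α).mul ((hasDerivAt_id' x).const_sub β)).congr_deriv ?_
  ring

theorem deriv_tubeBump (lo hi : ℝ → ℝ) (u : ℝ) : deriv (tubeBump lo hi u) =
    fun x => 3 * max ((x - lo u) * (hi u - x)) 0 ^ 2 * (lo u + hi u - 2 * x) :=
  funext fun x => ((hasDerivAt_max_zero_pow 1 _).comp x (hasDerivAt_sub_mul_sub _ _ x)).deriv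

theorem iteratedDeriv_two_tubeBump (lo hi : ℝ → ℝ) (u x : ℝ) :
    iteratedDeriv 2 (tubeBump lo hi u) x =
      6 * max ((x - lo u) * (hi u - x)) 0 * (lo u + hi u - 2 * x) ^ 2 -
        6 * max ((x - lo u) * (hi u - x)) 0 ^ 2 := by
  rw [iteratedDeriv_succ, iteratedDeriv_one, deriv_tubeBump]
  have inner := (hasDerivAt_max_zero_pow 0 _).comp x (hasDerivAt_sub_mul_sub (lo u) (hi u) x)
  have linear := ((hasDerivAt_id' x).const_mul 2).const_sub (lo u + hi u)
  refine (((inner.const_mul 3).mul linear).congr_deriv ?_).deriv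
  simp only [Function.comp_apply]
  push_cast
  ring

theorem deriv_tubeBump_time (hlo : DifferentiableAt ℝ lo u) (hhi : DifferentiableAt ℝ hi u) :
    deriv (fun r => tubeBump lo hi r x) u = 3 * max ((x - lo u) * (hi u - x)) 0 ^ 2 *
      ((x - lo u) * deriv hi u - deriv lo u * (hi u - x)) := by
  have inner := (hlo.hasDerivAt.const_sub x).mul (hhi.hasDerivAt.sub_const x)
  refine (((hasDerivAt_max_zero_pow 1 _).comp u inner).congr_deriv ?_).deriv
  simp only [Pi.mul_apply]
  push_cast
  ring

theorem generator_tubeBump_add_deriv (b a : ℝ → ℝ → ℝ) (hlo : DifferentiableAt ℝ lo u)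
    (hhi : DifferentiableAt ℝ hi u) :
    generator b a (tubeBump lo hi u) u x + deriv (fun r => tubeBump lo hi r x) u =
      max ((x - lo u) * (hi u - x)) 0 * tubeBumpRate b a lo hi u x := by
  rw [generator, deriv_tubeBump, iteratedDeriv_two_tubeBump, deriv_tubeBump_time hlo hhi,
    tubeBumpRate]
  ring

theorem exists_forall_nonneg_mul_add {X : Type*} [TopologicalSpace X] {T : Set X} {f g : X → ℝ}
    (hT : IsCompact T) (hf : Continuous f) (hg : Continuous g) (hf0 : ∀ z ∈ T, 0 ≤ f z)
    (hfg : ∀ z ∈ T, f z = 0 → ∀ᶠ z' in 𝓝 z, 0 ≤ g z') :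
    ∃ lam, ∀ z ∈ T, 0 ≤ lam * f z + g z := by
  have f_ne_zero : ∀ z ∈ T ∩ closure {z | g z < 0}, f z ≠ 0 := fun z hz hfz =>
    mem_closure_iff_frequently.1 hz.2 ((hfg z hz.1 hfz).mono fun _ => not_lt_of_ge)
  obtain ⟨lam, hlam⟩ := (hT.inter_right isClosed_closure).exists_bound_of_continuousOn
    (hg.continuousOn.div hf.continuousOn f_ne_zero)
  refine ⟨max lam 0, fun z hz => ?_⟩
  by_cases hgz : 0 ≤ g z
  · exact add_nonneg (mul_nonneg (le_max_right _ _) (hf0 z hz)) hgz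
  have hzN : z ∈ T ∩ closure {z | g z < 0} := ⟨hz, subset_closure (not_le.1 hgz)⟩
  have fz_pos : 0 < f z := (hf0 z hz).lt_of_ne' (f_ne_zero z hzN)
  have bound : -(g z / f z) ≤ max lam 0 :=
    (neg_le_abs _).trans ((hlam z hzN).trans (le_max_left _ _))
  rw [← neg_div, div_le_iff₀ fz_pos] at bound
  linarith

theorem continuous_tubeBumpRate (hb : Continuous (Function.uncurry b))
    (ha : Continuous (Function.uncurry a)) (hlo : ContDiff ℝ 1 lo) (hhi : ContDiff ℝ 1 hi) :
    Continuous (Function.uncurry (tubeBumpRate b a lo hi)) := by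
  have := hlo.continuous
  have := hhi.continuous
  have := hlo.continuous_deriv le_rfl
  have := hhi.continuous_deriv le_rfl
  unfold tubeBumpRate
  fun_prop

theorem isCompact_setOf_le_le {s t : ℝ} (hlo : Continuous lo) (hhi : Continuous hi) :
    IsCompact {p : ℝ × ℝ | p.1 ∈ Set.Icc s t ∧ lo p.1 ≤ p.2 ∧ p.2 ≤ hi p.1} := by
  obtain ⟨m, hm⟩ := (isCompact_Icc (a := s) (b := t)).bddBelow_image hlo.continuousOn
  obtain ⟨M, hM⟩ := (isCompact_Icc (a := s) (b := t)).bddAbove_image hhi.continuousOn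
  refine (isCompact_Icc.prod (isCompact_Icc (a := m) (b := M))).of_isClosed_subset
    ((isClosed_Icc.preimage continuous_fst).inter
      ((isClosed_le (hlo.comp continuous_fst) continuous_snd).inter
        (isClosed_le continuous_snd (hhi.comp continuous_fst)))) fun p hp => ⟨hp.1, ?_, ?_⟩
  · exact (hm ⟨p.1, hp.1, rfl⟩).trans hp.2.1
  · exact hp.2.2.trans (hM ⟨p.1, hp.1, rfl⟩)

namespace IsTube

variable {s t : ℝ}

theorem eventually_tubeBumpRate_nonneg (h : IsTube b a lo hi (Set.Icc s t))
    (hb : Continuous (Function.uncurry b)) (ha : Continuous (Function.uncurry a))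
    (ha0 : ∀ u x, 0 ≤ a u x) (hu : u ∈ Set.Icc s t) (hx : x = lo u ∨ x = hi u) :
    ∀ᶠ p in 𝓝 (u, x), 0 ≤ Function.uncurry (tubeBumpRate b a lo hi) p := by
  have width := h.lt u hu
  have lo_cont := h.contDiff_lo.continuous
  have hi_cont := h.contDiff_hi.continuous
  have rate_cont := continuous_tubeBumpRate hb ha h.contDiff_lo h.contDiff_hi
  have edge : 0 < a u x ∨ 0 < (x - lo u) * deriv hi u - deriv lo u * (hi u - x) +
      b u x * (lo u + hi u - 2 * x) := by
    rcases hx with rfl | rfl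
    · refine (h.lower_edge u hu).imp_right fun hlo => ?_
      linarith [mul_pos (sub_pos.2 hlo) (sub_pos.2 width)]
    · refine (h.upper_edge u hu).imp_right fun hhi => ?_
      linarith [mul_pos (sub_pos.2 hhi) (sub_pos.2 width)]
  have slope_pos : 0 < (lo u + hi u - 2 * x) ^ 2 := by
    rcases hx with rfl | rfl <;> apply sq_pos_of_ne_zero <;> linarith
  have vanish : (x - lo u) * (hi u - x) = 0 := by rcases hx with rfl | rfl <;> ring
  rcases edge with diffusive | inward
  · refine ((rate_cont.tendsto (u, x)).eventually_const_lt ?_).mono fun _ => le_of_lt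
    simp only [Function.uncurry_apply_pair, tubeBumpRate, vanish]
    simpa using mul_pos (mul_pos three_pos diffusive) slope_pos
  · have drift_cont : Continuous fun p : ℝ × ℝ => (p.2 - lo p.1) * deriv hi p.1 -
        deriv lo p.1 * (hi p.1 - p.2) + b p.1 p.2 * (lo p.1 + hi p.1 - 2 * p.2) := by
      have := h.contDiff_lo.continuous_deriv le_rfl
      have := h.contDiff_hi.continuous_deriv le_rfl
      fun_prop
    have curvature_cont : Continuous fun p : ℝ × ℝ =>
        (lo p.1 + hi p.1 - 2 * p.2) ^ 2 - max ((p.2 - lo p.1) * (hi p.1 - p.2)) 0 := by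
      fun_prop
    filter_upwards [(drift_cont.tendsto (u, x)).eventually_const_lt inward,
      (curvature_cont.tendsto (u, x)).eventually_const_lt (by simpa [vanish] using slope_pos)]
      with p drift_pos curvature_pos
    exact add_nonneg (mul_nonneg (mul_nonneg zero_le_three (le_max_right _ _)) drift_pos.le)
      (mul_nonneg (mul_nonneg zero_le_three (ha0 _ _)) curvature_pos.le)

theorem exists_isSubsolution (h : IsTube b a lo hi (Set.Icc s t))
    (hb : Continuous (Function.uncurry b)) (ha : Continuous (Function.uncurry a))
    (ha0 : ∀ u x, 0 ≤ a u x) : ∃ lam, IsSubsolution b a (tubeBump lo hi) lam s t := by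
  have lo_cont := h.contDiff_lo.continuous
  have hi_cont := h.contDiff_hi.continuous
  have region_compact := isCompact_setOf_le_le (s := s) (t := t) lo_cont hi_cont
  have rate_nonneg : ∀ p ∈ {p : ℝ × ℝ | p.1 ∈ Set.Icc s t ∧ lo p.1 ≤ p.2 ∧ p.2 ≤ hi p.1},
      max ((p.2 - lo p.1) * (hi p.1 - p.2)) 0 ^ 2 = 0 →
        ∀ᶠ p' in 𝓝 p, 0 ≤ Function.uncurry (tubeBumpRate b a lo hi) p' := by
    rintro ⟨u, x⟩ ⟨hu, hlo, hhi⟩ hzero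
    have vanish : (x - lo u) * (hi u - x) = 0 := (max_eq_right_iff.1 (pow_eq_zero_iff
      two_ne_zero |>.1 hzero)).antisymm (mul_nonneg (sub_nonneg.2 hlo) (sub_nonneg.2 hhi))
    exact h.eventually_tubeBumpRate_nonneg hb ha ha0 hu
      ((mul_eq_zero.1 vanish).imp sub_eq_zero.1 fun hx => (sub_eq_zero.1 hx).symm)
  obtain ⟨lam, hlam⟩ := exists_forall_nonneg_mul_add region_compact (by fun_prop)
    (continuous_tubeBumpRate hb ha h.contDiff_lo h.contDiff_hi) (fun _ _ => sq_nonneg _)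
    rate_nonneg
  refine ⟨lam, contDiff_uncurry_tubeBump h.contDiff_lo h.contDiff_hi,
    fun u _ => contDiff_tubeBump lo hi u, fun u _ => tubeBump_nonneg lo hi u,
    ⟨_, region_compact.image continuous_snd, fun u hu x hx => ?_⟩, fun u hu x => ?_⟩
  · exact (tubeBump_eq_zero_iff (h.lt u hu).le).2 fun mem =>
      hx ⟨(u, x), ⟨hu, mem.1.le, mem.2.le⟩, rfl⟩
  rw [generator_tubeBump_add_deriv b a (h.contDiff_lo.differentiable one_ne_zero u)
    (h.contDiff_hi.differentiable one_ne_zero u)]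
  by_cases hx : x ∈ Set.Ioo (lo u) (hi u)
  · have factor : 0 ≤ max ((x - lo u) * (hi u - x)) 0 *
        (lam * max ((x - lo u) * (hi u - x)) 0 ^ 2 + tubeBumpRate b a lo hi u x) :=
      mul_nonneg (le_max_right _ _) (hlam (u, x) ⟨hu, hx.1.le, hx.2.le⟩)
    rw [tubeBump]
    linarith
  · have bump_zero := (tubeBump_eq_zero_iff (h.lt u hu).le).2 hx
    rw [bump_zero, (pow_eq_zero_iff three_ne_zero).1 bump_zero]
    simp

end IsTube

/-- The paths that are inside the moving interval `(lo, hi)` at every rational time between `s`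
and `t`. Restricting to rational times makes this a measurable set of paths. -/
def tubePaths (lo hi : ℝ → ℝ) (s t : ℝ) : Set (ℝ → ℝ) :=
  {y | ∀ q : ℚ, s ≤ q → q ≤ t → y q ∈ Set.Ioo (lo q) (hi q)}

theorem measurableSet_tubePaths (lo hi : ℝ → ℝ) (s t : ℝ) :
    MeasurableSet (tubePaths lo hi s t) := by
  simp only [tubePaths, Set.ofPred_forall]
  exact .iInter fun q => .iInter fun _ => .iInter fun _ =>
    measurableSet_Ioo.preimage (measurable_pi_apply (q : ℝ))

theorem IsTube.exists_pos_le_measureReal_tubePaths {s t : ℝ} {K : Set (ℝ × ℝ)}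
    (h : IsTube b a lo hi (Set.Icc s t)) (hb : Continuous (Function.uncurry b))
    (ha : Continuous (Function.uncurry a)) (ha0 : ∀ u x, 0 ≤ a u x) (hK : IsCompact K)
    (hsub : ∀ p ∈ K, p.1 ∈ Set.Icc s t ∧ p.2 ∈ Set.Ioo (lo p.1) (hi p.1)) :
    ∃ c, 0 < c ∧ ∀ p ∈ K, ∀ {Ω : Type*} [MeasureSpace Ω]
      [IsProbabilityMeasure (volume : Measure Ω)] {Y : Ω → ℝ → ℝ},
      IsDiffusionFrom p.1 b a p.2 Y → c ≤ volume.real {ω | Y ω ∈ tubePaths lo hi p.1 t} := by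
  obtain ⟨lam, sub⟩ := h.exists_isSubsolution hb ha ha0
  obtain ⟨C, C_nonneg, hC⟩ := sub.exists_forall_abs_le
  have initial_cont : Continuous fun p : ℝ × ℝ =>
      Real.exp (-lam * (t - p.1)) * tubeBump lo hi p.1 p.2 :=
    .mul (by fun_prop) sub.contDiff.continuous
  obtain ⟨m, m_pos, hm⟩ := hK.exists_forall_le' initial_cont.continuousOn fun p hp =>
    mul_pos (Real.exp_pos _) ((tubeBump_pos_iff (h.lt _ (hsub p hp).1).le).2 (hsub p hp).2)
  refine ⟨m / (C + 1), by positivity, fun p hp Ω _ _ Y hY => ?_⟩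
  obtain ⟨hp1, -⟩ := hsub p hp
  let times : Set ℝ := (↑) '' {q : ℚ | p.1 ≤ q ∧ (q : ℝ) ≤ t}
  have times_sub : times ⊆ Set.Icc p.1 t := by
    rintro _ ⟨q, hq, rfl⟩
    exact hq
  have alive_sub : aliveOn (tubeBump lo hi) Y times ⊆ {ω | Y ω ∈ tubePaths lo hi p.1 t} :=
    fun ω hω q hq hqt => (tubeBump_pos_iff (h.lt q ⟨hp1.1.trans hq, hqt⟩).le).1
      (hω q ⟨q, ⟨hq, hqt⟩, rfl⟩)
  have alive_bound := (sub.mono hp1.1 le_rfl).exp_mul_le_measureReal hb ha hY hp1.2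
    (fun x => (hC t ⟨hp1.1.trans hp1.2, le_rfl⟩ x).trans (le_add_of_nonneg_right zero_le_one))
    ((Set.to_countable _).image _) times_sub
  rw [div_le_iff₀' (by positivity)]
  exact (hm p hp).trans (alive_bound.trans
    (mul_le_mul_of_nonneg_left (measureReal_mono alive_sub) (by positivity)))

end Tube

section Meeting

theorem le_of_forall_rat_le {f g : ℝ → ℝ} {s t u : ℝ} (hst : s < t)
    (hf : ContinuousOn f (Set.Icc s t)) (hg : ContinuousOn g (Set.Icc s t))
    (h : ∀ q : ℚ, s ≤ q → q ≤ t → f q ≤ g q) (hu : u ∈ Set.Icc s t) : f u ≤ g u := by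
  have dense : Set.Icc s t ⊆ closure (Set.Ioo s t ∩ Set.range ((↑) : ℚ → ℝ)) := by
    rw [← closure_Ioo hst.ne]
    exact closure_minimal (Rat.denseRange_cast.open_subset_closure_inter isOpen_Ioo)
      isClosed_closure
  have sub : Set.Ioo s t ∩ Set.range ((↑) : ℚ → ℝ) ⊆ Set.Icc s t :=
    Set.inter_subset_left.trans Set.Ioo_subset_Icc_self
  refine ((hf u hu).mono sub).closure_le (dense hu) ((hg u hu).mono sub) ?_
  rintro _ ⟨hq, q, rfl⟩
  exact h q hq.1.le hq.2.le

theorem mem_Icc_of_mem_tubePaths {lo hi y : ℝ → ℝ} {s t u : ℝ} (hy : y ∈ tubePaths lo hi s t)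
    (hst : s < t) (hcont : ContinuousOn y (Set.Icc s t)) (hlo : Continuous lo)
    (hhi : Continuous hi) (hu : u ∈ Set.Icc s t) : y u ∈ Set.Icc (lo u) (hi u) :=
  ⟨le_of_forall_rat_le hst hlo.continuousOn hcont (fun q hs ht => (hy q hs ht).1.le) hu,
    le_of_forall_rat_le hst hcont hhi.continuousOn (fun q hs ht => (hy q hs ht).2.le) hu⟩

variable {t0 s0 : ℝ} {y z : ℝ → ℝ}

theorem besqMeet_eq_ofReal_sInf (h : {s | max t0 s0 < s ∧ z s = y s}.Nonempty) :
    besqMeet t0 s0 y z = ENNReal.ofReal (sInf {s | max t0 s0 < s ∧ z s = y s}) := by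
  rw [besqMeet, ← sInf_image, ENNReal.ofReal_mono.map_csInf_of_continuousAt
    ENNReal.continuous_ofReal.continuousAt h ⟨max t0 s0, fun _ hs => hs.1.le⟩]

theorem ofReal_besqSigma_eq_besqMeet {r : ℝ} (hr : r ∈ Set.Ioc (max t0 s0) 2) (hmeet : z r = y r)
    (hlt : ∀ u ∈ Set.Ioc (max t0 s0) 2, max (z u) (y u) < 2) :
    ENNReal.ofReal (besqSigma t0 s0 y z) = besqMeet t0 s0 y z := by
  have r_mem : r ∈ {s | max t0 s0 < s ∧ z s = y s} := ⟨hr.1, hmeet⟩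
  have bddBelow_meet : BddBelow {s | max t0 s0 < s ∧ z s = y s} :=
    ⟨max t0 s0, fun _ hs => hs.1.le⟩
  rw [besqMeet_eq_ofReal_sInf ⟨r, r_mem⟩, besqSigma]
  congr 1
  refine le_antisymm (csInf_le_csInf ⟨max t0 s0, ?_⟩ ⟨r, r_mem⟩ fun s hs => .inl ⟨hs.1, .inl hs.2⟩)
    (le_csInf ⟨2, .inr rfl⟩ ?_)
  · rintro s (hs | rfl)
    exacts [hs.1.le, hr.1.le.trans hr.2]
  · rintro s (⟨hs, heq | hmax⟩ | rfl)
    · exact csInf_le bddBelow_meet ⟨hs, heq⟩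
    · have two_lt : 2 < s := not_le.1 fun hs2 => (hlt s ⟨hs, hs2⟩).ne hmax
      exact (csInf_le bddBelow_meet r_mem).trans (hr.2.trans two_lt.le)
    · exact (csInf_le bddBelow_meet r_mem).trans hr.2

theorem ofReal_besqSigma_eq_besqMeet_of_mem_tubePaths {lo hi lo' hi' : ℝ → ℝ} {v : ℝ}
    (hlo : Continuous lo) (hhi : Continuous hi) (hlo' : Continuous lo') (hhi' : Continuous hi')
    (hv : max t0 s0 < v) (hv2 : v < 2) (before : hi v ≤ lo' v) (after : hi' 2 ≤ lo 2)
    (hi_lt : ∀ u ∈ Set.Icc t0 2, hi u < 2) (hi'_lt : ∀ u ∈ Set.Icc s0 2, hi' u < 2)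
    (hyc : ContinuousOn y (Set.Ici t0)) (hzc : ContinuousOn z (Set.Ici s0))
    (hy : y ∈ tubePaths lo hi t0 2) (hz : z ∈ tubePaths lo' hi' s0 2) :
    ENNReal.ofReal (besqSigma t0 s0 y z) = besqMeet t0 s0 y z := by
  obtain ⟨ht0, hs0⟩ := max_lt_iff.1 hv
  have y_mem : ∀ u ∈ Set.Icc t0 2, y u ∈ Set.Icc (lo u) (hi u) := fun u hu =>
    mem_Icc_of_mem_tubePaths hy (ht0.trans hv2) (hyc.mono Set.Icc_subset_Ici_self) hlo hhi hu
  have z_mem : ∀ u ∈ Set.Icc s0 2, z u ∈ Set.Icc (lo' u) (hi' u) := fun u hu =>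
    mem_Icc_of_mem_tubePaths hz (hs0.trans hv2) (hzc.mono Set.Icc_subset_Ici_self) hlo' hhi' hu
  obtain ⟨r, hr, hmeet⟩ : ∃ r ∈ Set.Icc v 2, y r = z r :=
    isPreconnected_Icc.intermediate_value₂ (Set.left_mem_Icc.2 hv2.le)
      (Set.right_mem_Icc.2 hv2.le) (hyc.mono fun u hu => ht0.le.trans hu.1)
      (hzc.mono fun u hu => hs0.le.trans hu.1)
      ((y_mem v ⟨ht0.le, hv2.le⟩).2.trans (before.trans (z_mem v ⟨hs0.le, hv2.le⟩).1))
      ((z_mem 2 ⟨(hs0.trans hv2).le, le_rfl⟩).2.trans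
        (after.trans (y_mem 2 ⟨(ht0.trans hv2).le, le_rfl⟩).1))
  refine ofReal_besqSigma_eq_besqMeet ⟨hv.trans_le hr.1, hr.2⟩ hmeet.symm fun u hu => ?_
  have hut : u ∈ Set.Icc t0 2 := ⟨(le_max_left _ _).trans hu.1.le, hu.2⟩
  have hus : u ∈ Set.Icc s0 2 := ⟨(le_max_right _ _).trans hu.1.le, hu.2⟩
  exact max_lt ((z_mem u hus).2.trans_lt (hi'_lt u hus)) ((y_mem u hut).2.trans_lt (hi_lt u hut))

end Meeting

section BesselTubes

theorem isTube_besq {d : ℝ} {lo hi : ℝ → ℝ} {I : Set ℝ} (hlo : ContDiff ℝ 1 lo)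
    (hhi : ContDiff ℝ 1 hi) (lt : ∀ u ∈ I, lo u < hi u) (hi_pos : ∀ u ∈ I, 0 < hi u)
    (slope_lt : ∀ u ∈ I, lo u ≤ 0 → deriv lo u < d) :
    IsTube (fun _ _ => d) (fun _ x => 4 * max x 0) lo hi I where
  contDiff_lo := hlo
  contDiff_hi := hhi
  lt := lt
  lower_edge u hu := (lt_or_ge 0 (lo u)).imp
    (fun h => mul_pos four_pos (lt_max_of_lt_left h)) (slope_lt u hu)
  upper_edge u hu := .inl (mul_pos four_pos (lt_max_of_lt_left (hi_pos u hu)))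

/-- A smooth time change that rests at `0` up to time `1` and reaches `1` at time `2`. -/
def ramp (u : ℝ) : ℝ :=
  max (u - 1) 0 ^ 2

/-- The lower edge of the tube that forces a process up: it rests at `-ε` up to time `1` and climbs
to `1 / 2` at time `2`. -/
def ascent (ε u : ℝ) : ℝ :=
  -ε + (1 / 2 + ε) * ramp u

/-- The lower edge of the tube that holds a process up at time `3 / 2`: it rests at `-ε` up to
time `1`, passes through `1 / 2` at time `3 / 2` and is back at `-ε` at time `2`. -/
def arch (ε u : ℝ) : ℝ :=
  -ε + 8 / 3 * (1 + 2 * ε) * (ramp u * (1 - ramp u))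

variable {ε u d : ℝ}

theorem hasDerivAt_ramp (u : ℝ) : HasDerivAt ramp (2 * max (u - 1) 0) u := by
  have shift := (hasDerivAt_id' u).sub_const 1
  refine ((hasDerivAt_max_zero_pow 0 (u - 1)).comp u shift).congr_deriv ?_
  simp

theorem contDiff_ramp : ContDiff ℝ 1 ramp :=
  (contDiff_max_zero_pow 1).comp (contDiff_id.sub contDiff_const)

theorem contDiff_ascent (ε : ℝ) : ContDiff ℝ 1 (ascent ε) :=
  contDiff_const.add (contDiff_const.mul contDiff_ramp)

theorem contDiff_arch (ε : ℝ) : ContDiff ℝ 1 (arch ε) :=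
  contDiff_const.add (contDiff_const.mul (contDiff_ramp.mul (contDiff_const.sub contDiff_ramp)))

theorem deriv_ascent (ε u : ℝ) : deriv (ascent ε) u = (1 + 2 * ε) * max (u - 1) 0 := by
  refine (((hasDerivAt_ramp u).const_mul (1 / 2 + ε)).const_add (-ε)).deriv.trans ?_
  ring

theorem deriv_arch (ε u : ℝ) :
    deriv (arch ε) u = 16 / 3 * (1 + 2 * ε) * max (u - 1) 0 * (1 - 2 * ramp u) := by
  refine ((((hasDerivAt_ramp u).mul ((hasDerivAt_ramp u).const_sub 1)).const_mul
    (8 / 3 * (1 + 2 * ε))).const_add (-ε)).deriv.trans ?_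
  ring

theorem ramp_nonneg (u : ℝ) : 0 ≤ ramp u :=
  sq_nonneg _

theorem ramp_le_one (hu : u ≤ 2) : ramp u ≤ 1 :=
  pow_le_one₀ (le_max_right _ _) (max_le (by linarith) zero_le_one)

theorem ramp_eq_zero (hu : u ≤ 1) : ramp u = 0 := by
  rw [ramp, max_eq_right (sub_nonpos.2 hu), zero_pow two_ne_zero]

theorem ascent_of_le_one (ε : ℝ) (hu : u ≤ 1) : ascent ε u = -ε := by
  simp [ascent, ramp_eq_zero hu]

theorem arch_of_le_one (ε : ℝ) (hu : u ≤ 1) : arch ε u = -ε := by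
  simp [arch, ramp_eq_zero hu]

theorem ascent_two (ε : ℝ) : ascent ε 2 = 1 / 2 := by
  norm_num [ascent, ramp]

theorem arch_three_halves (ε : ℝ) : arch ε (3 / 2) = 1 / 2 := by
  norm_num [arch, ramp]
  ring

theorem neg_le_ascent (hε : 0 ≤ ε) (u : ℝ) : -ε ≤ ascent ε u :=
  le_add_of_nonneg_right (mul_nonneg (by positivity) (ramp_nonneg u))

theorem neg_le_arch (hε : 0 ≤ ε) (hu : u ≤ 2) : -ε ≤ arch ε u :=
  le_add_of_nonneg_right (mul_nonneg (by positivity)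
    (mul_nonneg (ramp_nonneg u) (sub_nonneg.2 (ramp_le_one hu))))

theorem ascent_le_half (hε : 0 ≤ ε) (hu : u ≤ 2) : ascent ε u ≤ 1 / 2 := by
  have := mul_le_mul_of_nonneg_left (ramp_le_one hu) (by positivity : 0 ≤ 1 / 2 + ε)
  rw [ascent]
  linarith

theorem arch_lt_one (hε : 0 ≤ ε) (hε' : ε ≤ 1 / 4) (u : ℝ) : arch ε u < 1 := by
  have : ramp u * (1 - ramp u) ≤ 1 / 4 := by linarith [sq_nonneg (ramp u - 1 / 2)]
  have := mul_le_mul_of_nonneg_left this (by positivity : 0 ≤ 8 / 3 * (1 + 2 * ε))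
  rw [arch]
  linarith

theorem ascent_add_arch_lt_one (hε : 0 ≤ ε) (u : ℝ) : ascent ε u + arch ε u < 1 := by
  rw [ascent, arch]
  nlinarith [sq_nonneg (ramp u - 3 / 5), mul_nonneg hε (sq_nonneg (ramp u - 3 / 5))]

theorem deriv_ascent_lt (hε : 0 ≤ ε) (hε' : ε ≤ 1 / 4) (hd : 0 < d) (hεd : 16 * ε < d ^ 2)
    (h : ascent ε u ≤ 0) : deriv (ascent ε) u < d := by
  rw [deriv_ascent]
  refine lt_of_pow_lt_pow_left₀ 2 hd.le (lt_of_le_of_lt ?_ hεd)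
  have ramp_small : (1 + 2 * ε) * ramp u ≤ 2 * ε := by
    rw [ascent] at h
    linarith
  calc ((1 + 2 * ε) * max (u - 1) 0) ^ 2 = (1 + 2 * ε) * ((1 + 2 * ε) * ramp u) := by
        rw [ramp]; ring
    _ ≤ (1 + 2 * ε) * (2 * ε) := by gcongr
    _ ≤ 16 * ε := by nlinarith

theorem deriv_arch_lt (hε : 0 ≤ ε) (hε' : ε ≤ 1 / 4) (hd : 0 < d) (hεd : 16 * ε < d ^ 2)
    (h : arch ε u ≤ 0) : deriv (arch ε) u < d := by
  rw [deriv_arch]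
  have speed_nonneg : 0 ≤ 16 / 3 * (1 + 2 * ε) * max (u - 1) 0 := by positivity
  rcases le_total 1 (2 * ramp u) with descending | ascending
  · exact (mul_nonpos_of_nonneg_of_nonpos speed_nonneg (sub_nonpos.2 descending)).trans_lt hd
  refine lt_of_pow_lt_pow_left₀ 2 hd.le (lt_of_le_of_lt ?_ hεd)
  have arch_small : 8 / 3 * (1 + 2 * ε) * (ramp u * (1 - ramp u)) ≤ ε := by
    rw [arch] at h
    linarith
  have shape : (1 - 2 * ramp u) ^ 2 ≤ 1 - ramp u := by
    nlinarith [ramp_nonneg u]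
  calc (16 / 3 * (1 + 2 * ε) * max (u - 1) 0 * (1 - 2 * ramp u)) ^ 2
      = (16 / 3 * (1 + 2 * ε)) ^ 2 * (ramp u * (1 - 2 * ramp u) ^ 2) := by rw [ramp]; ring
    _ ≤ (16 / 3 * (1 + 2 * ε)) ^ 2 * (ramp u * (1 - ramp u)) := by gcongr; exact ramp_nonneg u
    _ = 32 / 3 * (1 + 2 * ε) * (8 / 3 * (1 + 2 * ε) * (ramp u * (1 - ramp u))) := by ring
    _ ≤ 32 / 3 * (1 + 2 * ε) * ε := by gcongr
    _ ≤ 16 * ε := by nlinarith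

theorem isTube_rising (hε : 0 < ε) (hε' : ε ≤ 1 / 4) (hd : 0 < d) (hεd : 16 * ε < d ^ 2)
    (I : Set ℝ) : IsTube (fun _ _ => d) (fun _ x => 4 * max x 0) (ascent ε)
      (fun u => 1 - arch ε u) I :=
  isTube_besq (contDiff_ascent ε) (contDiff_const.sub (contDiff_arch ε))
    (fun u _ => lt_sub_iff_add_lt.2 (ascent_add_arch_lt_one hε.le u))
    (fun u _ => sub_pos.2 (arch_lt_one hε.le hε' u))
    fun _ _ => deriv_ascent_lt hε.le hε' hd hεd

theorem isTube_falling (hε : 0 < ε) (hε' : ε ≤ 1 / 4) (hd : 0 < d) (hεd : 16 * ε < d ^ 2)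
    (s : ℝ) : IsTube (fun _ _ => d) (fun _ x => 4 * max x 0) (arch ε)
      (fun u => 1 - ascent ε u) (Set.Icc s 2) :=
  isTube_besq (contDiff_arch ε) (contDiff_const.sub (contDiff_ascent ε))
    (fun u _ => lt_sub_iff_add_lt'.2 (ascent_add_arch_lt_one hε.le u))
    (fun u hu => by linarith [ascent_le_half hε.le hu.2])
    fun _ _ => deriv_arch_lt hε.le hε' hd hεd

theorem exists_pos_le_measureReal_besq_mem_tubePaths {lo hi : ℝ → ℝ}
    (h : IsTube (fun _ _ => d) (fun _ x => 4 * max x 0) lo hi (Set.Icc 0 2))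
    (lo_neg : ∀ u ≤ 1, lo u < 0) (one_lt_hi : ∀ u ≤ 1, 1 < hi u) :
    ∃ c, 0 < c ∧ ∀ t0 ∈ Set.Icc (0 : ℝ) 1, ∀ y0 ∈ Set.Icc (0 : ℝ) 1, ∀ {Ω : Type*} [MeasureSpace Ω]
      [IsProbabilityMeasure (volume : Measure Ω)] {Y : Ω → ℝ → ℝ},
      IsDiffusionFrom t0 (fun _ _ => d) (fun _ x => 4 * max x 0) y0 Y →
        c ≤ volume.real {ω | Y ω ∈ tubePaths lo hi t0 2} := by
  obtain ⟨c, c_pos, hc⟩ := h.exists_pos_le_measureReal_tubePaths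
    (K := Set.Icc 0 1 ×ˢ Set.Icc 0 1) (by fun_prop) (by fun_prop) (fun _ _ => by positivity)
    (isCompact_Icc.prod isCompact_Icc) fun p ⟨ht, hy⟩ => ⟨⟨ht.1, ht.2.trans one_le_two⟩,
      (lo_neg _ ht.2).trans_le hy.1, hy.2.trans_lt (one_lt_hi _ ht.2)⟩
  exact ⟨c, c_pos, fun t0 ht0 y0 hy0 Ω _ _ Y => hc (t0, y0) ⟨ht0, hy0⟩⟩

theorem exists_margin (hd : 0 < d) : ∃ ε : ℝ, 0 < ε ∧ ε ≤ 1 / 4 ∧ 16 * ε < d ^ 2 := by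
  have : 0 < d ^ 2 := by positivity
  refine ⟨min (1 / 4) (d ^ 2 / 32), by positivity, min_le_left _ _, ?_⟩
  linarith [min_le_right (1 / 4) (d ^ 2 / 32)]

theorem ofReal_besqSigma_eq_besqMeet_of_rising_of_falling {δ t0 s0 : ℝ} {y z : ℝ → ℝ}
    (hε : 0 ≤ ε) (hε' : ε ≤ 1 / 4) (hδ : 0 ≤ δ) (hδ' : δ ≤ 1 / 4) (ht0 : t0 ≤ 1) (hs0 : s0 ≤ 1)
    (hyc : ContinuousOn y (Set.Ici t0)) (hzc : ContinuousOn z (Set.Ici s0))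
    (hy : y ∈ tubePaths (ascent ε) (fun u => 1 - arch ε u) t0 2)
    (hz : z ∈ tubePaths (arch δ) (fun u => 1 - ascent δ u) s0 2) :
    ENNReal.ofReal (besqSigma t0 s0 y z) = besqMeet t0 s0 y z := by
  refine ofReal_besqSigma_eq_besqMeet_of_mem_tubePaths (v := 3 / 2) (contDiff_ascent ε).continuous
    (continuous_const.sub (contDiff_arch ε).continuous) (contDiff_arch δ).continuous
    (continuous_const.sub (contDiff_ascent δ).continuous) (max_lt (by linarith) (by linarith))
    (by norm_num) ?_ ?_ (fun u hu => ?_) (fun u _ => ?_) hyc hzc hy hz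
  · norm_num [arch_three_halves]
  · norm_num [ascent_two]
  · change 1 - arch ε u < 2
    linarith [neg_le_arch hε hu.2]
  · change 1 - ascent δ u < 2
    linarith [neg_le_ascent hδ u]

end BesselTubes

theorem ofReal_mul_le_measure_inter_preimage {Ω β γ : Type*} [MeasurableSpace Ω]
    [MeasurableSpace β] [MeasurableSpace γ] {μ : Measure Ω} {f : Ω → β} {g : Ω → γ} {A : Set β}
    {B : Set γ} {c c' : ℝ} (h : IndepFun f g μ) (hA : MeasurableSet A) (hB : MeasurableSet B)
    (hc : 0 ≤ c) (hcA : c ≤ μ.real (f ⁻¹' A)) (hcB : c' ≤ μ.real (g ⁻¹' B)) :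
    ENNReal.ofReal (c * c') ≤ μ (f ⁻¹' A ∩ g ⁻¹' B) := by
  rw [h.measure_inter_preimage_eq_mul A B hA hB, ENNReal.ofReal_mul hc]
  exact mul_le_mul' (ENNReal.ofReal_le_of_le_toReal hcA) (ENNReal.ofReal_le_of_le_toReal hcB)

theorem statement5_general {d e : ℝ} (hd : 0 < d) (he : 0 < e) :
    ∃ c : ℝ, 0 < c ∧
      ∀ y0 t0 z0 s0 : ℝ, y0 ∈ Set.Icc (0 : ℝ) 1 → t0 ∈ Set.Icc (0 : ℝ) 1 →
        z0 ∈ Set.Icc (0 : ℝ) 1 → s0 ∈ Set.Icc (0 : ℝ) 1 →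
      ∀ (Ω : Type*) [MeasureSpace Ω] [IsProbabilityMeasure (volume : Measure Ω)],
      ∀ Y Z : Ω → ℝ → ℝ,
        IsDiffusionFrom t0 (fun _ _ => d) (fun _ x => 4 * max x 0) y0 Y →
        IsDiffusionFrom s0 (fun _ _ => e) (fun _ x => 4 * max x 0) z0 Z →
        IndepFun (fun ω => (fun t => Y ω t)) (fun ω => (fun t => Z ω t)) (volume : Measure Ω) →
        ENNReal.ofReal c ≤
          volume {ω | ENNReal.ofReal (besqSigma t0 s0 (Y ω) (Z ω))
            = besqMeet t0 s0 (Y ω) (Z ω)} := by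
  obtain ⟨ε, hε, hε', hεd⟩ := exists_margin hd
  obtain ⟨δ, hδ, hδ', hδe⟩ := exists_margin he
  obtain ⟨c, c_pos, rising⟩ := exists_pos_le_measureReal_besq_mem_tubePaths
    (isTube_rising hε hε' hd hεd _)
    (fun u hu => (ascent_of_le_one ε hu).trans_lt (neg_neg_of_pos hε))
    (fun u hu => by linarith [arch_of_le_one ε hu])
  obtain ⟨c', c'_pos, falling⟩ := exists_pos_le_measureReal_besq_mem_tubePaths
    (isTube_falling hδ hδ' he hδe _)
    (fun u hu => (arch_of_le_one δ hu).trans_lt (neg_neg_of_pos hδ))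
    (fun u hu => by linarith [ascent_of_le_one δ hu])
  refine ⟨c * c', mul_pos c_pos c'_pos,
    fun y0 t0 z0 s0 hy0 ht0 hz0 hs0 Ω _ _ Y Z hY hZ indep => ?_⟩
  refine (ofReal_mul_le_measure_inter_preimage indep (measurableSet_tubePaths _ _ _ _)
    (measurableSet_tubePaths _ _ _ _) c_pos.le (rising t0 ht0 y0 hy0 hY)
    (falling s0 hs0 z0 hz0 hZ)).trans (measure_mono_ae ?_)
  filter_upwards [hY.2.1, hZ.2.1] with ω ⟨hYω, _⟩ ⟨hZω, _⟩ ⟨hYtube, hZtube⟩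
  exact ofReal_besqSigma_eq_besqMeet_of_rising_of_falling hε.le hε' hδ.le hδ' ht0.2 hs0.2
    hYω hZω hYtube hZtube

/-- Two independent `BESQ²` processes started at space-time points in `[0,1]²`
meet before either exceeds level `2` and before time `2` with probability bounded below
uniformly in the starting data. -/
theorem statement5 :
    ∃ c : ℝ, 0 < c ∧
      ∀ y0 t0 z0 s0 : ℝ, y0 ∈ Set.Icc (0:ℝ) 1 → t0 ∈ Set.Icc (0:ℝ) 1 →
        z0 ∈ Set.Icc (0:ℝ) 1 → s0 ∈ Set.Icc (0:ℝ) 1 →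
      ∀ (Ω : Type) [MeasureSpace Ω] [IsProbabilityMeasure (volume : Measure Ω)],
      ∀ Y Z : Ω → ℝ → ℝ,
        IsDiffusionFrom t0 (fun _ _ => 2) (fun _ x => 4 * max x 0) y0 Y →
        IsDiffusionFrom s0 (fun _ _ => 2) (fun _ x => 4 * max x 0) z0 Z →
        IndepFun (fun ω => (fun t => Y ω t)) (fun ω => (fun t => Z ω t)) (volume : Measure Ω) →
        ENNReal.ofReal c ≤
          volume {ω | ENNReal.ofReal (besqSigma t0 s0 (Y ω) (Z ω))
            = besqMeet t0 s0 (Y ω) (Z ω)} := by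
  exact statement5_general two_pos two_pos

end Paper
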